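/- Let s ≥ 2, let ψ : [0,1]^{s-1} → ℝ≥0 be measurable with ψ ≤ L (0 < L < ∞), C = ∫_{[0,1]^{s-1}} ψ > 0, A = {z ∈ [0,1]^s : ψ(z_1,…,z_{s-1}) ≥ L z_s}, and assume ∂A admits an (s−1)-dimensional Minkowski content M_A ∈ (0,∞). Then there exists m_0 such that for all m ≥ m_0 and every point set P ⊆ [0,1)^s containing exactly one point in each of the M = m^s grid cubes Q_c, writing N = #(P ∩ A) and Y for the projections of the points of P ∩ A onto the first s−1 coordinates, one has N · D*_{N,ψ}(Y) ≤ 3 s^{1/2} M_A m^{s−1}, where D*_{N,ψ}(Y) = sup_{t ∈ [0,1]^{s-1}} |(1/N) Σ_{n=0}^{N−1} 1_{[0,t)}(y_n) − (1/C) ∫_{[0,t)} ψ|. -/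

import Mathlib

open MeasureTheory Set Filter

/-- The half-open anchored box `[0,t) = ∏_j [0, t_j)`. -/
def lowerBox {d : ℕ} (t : Fin d → ℝ) : Set (Fin d → ℝ) :=
  {y | ∀ i, 0 ≤ y i ∧ y i < t i}

/-- The region `A = {z ∈ [0,1]^s : ψ(z_1,…,z_{s-1}) ≥ L z_s}` (with `s = d+1`). -/
def graphRegion {d : ℕ} (ψ : (Fin d → ℝ) → ℝ) (L : ℝ) : Set ((Fin d → ℝ) × ℝ) :=
  {z | z.1 ∈ Icc (0 : Fin d → ℝ) 1 ∧ z.2 ∈ Icc (0 : ℝ) 1 ∧ L * z.2 ≤ ψ z.1}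

/-- The test set `J_t* = ([0,t) × [0,1]) ∩ A`. -/
def Jstar {d : ℕ} (ψ : (Fin d → ℝ) → ℝ) (L : ℝ) (t : Fin d → ℝ) : Set ((Fin d → ℝ) × ℝ) :=
  (lowerBox t ×ˢ Icc (0 : ℝ) 1) ∩ graphRegion ψ L

/-- The closed Euclidean `ε`-neighborhood of a set `E ⊆ ℝ^{d} × ℝ = ℝ^{d+1}`. -/
def euclNbhdP {d : ℕ} (E : Set ((Fin d → ℝ) × ℝ)) (ε : ℝ) : Set ((Fin d → ℝ) × ℝ) :=
  {x | ∃ y ∈ E, Real.sqrt ((∑ i, (x.1 i - y.1 i) ^ 2) + (x.2 - y.2) ^ 2) ≤ ε}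

/-- `∂A` admits the `(s-1)`-dimensional Minkowski content `M` (with `s = d+1`). -/
def HasMinkowskiContentP {d : ℕ} (A : Set ((Fin d → ℝ) × ℝ)) (M : ℝ) : Prop :=
  Tendsto (fun ε : ℝ => (volume (euclNbhdP (frontier A) ε)).toReal / (2 * ε))
    (nhdsWithin 0 (Set.Ioi 0)) (nhds M)

/-- The grid cube `Q_c = ∏_{j=1}^{d+1} [c_j/m, (c_j+1)/m)`. -/
def gridCubeP {d m : ℕ} (c : (Fin d → Fin m) × Fin m) : Set ((Fin d → ℝ) × ℝ) :=
  {z | (∀ i, (c.1 i : ℝ) / m ≤ z.1 i ∧ z.1 i < ((c.1 i : ℝ) + 1) / m) ∧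
       ((c.2 : ℝ) / m ≤ z.2 ∧ z.2 < ((c.2 : ℝ) + 1) / m)}

/-!
Put `s = d + 1`, let `B` be the test set, `J = A ∩ (B × ℝ)` and `p = vol J / vol A`, so that
`f = 1_J - p 1_A` has integral zero and oscillation at most one. Sampling `f` once per grid cube,
only the cubes on which `f` is not constant contribute to the error, each at most one. They either
meet `∂A` or lie inside `A` and straddle `∂B × ℝ`.

A cube meeting `∂A` lies in the `√s / m`-neighbourhood of `∂A`, so the Minkowski content bounds
their number by about `2 √s M_A m^(s-1)`. For the straddling cubes, walk from the cube in the two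
directions `±(1, …, 1, 0)` until `∂A` is hit. Since `B` is closed under decreasing the coordinates,
no two straddling cubes lie on a common diagonal, so distinct walks end in distinct cells meeting
`∂A` and there are about half as many straddling cubes. Cutting every cube into two halves of
height `1 / (2 m)` before walking replaces `√s` by the smaller `√(s - 3/4)`, and this gain absorbs
the error in the limit that defines `M_A`.
-/

open scoped Finset

lemma subset_interior_or_subset_interior_compl {X : Type*} [TopologicalSpace X] {s A : Set X}
    (hs : IsPreconnected s) (hsA : Disjoint s (frontier A)) :
    s ⊆ interior A ∨ s ⊆ interior Aᶜ := by
  refine hs.subset_or_subset isOpen_interior isOpen_interior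
    (disjoint_compl_right.mono interior_subset interior_subset) ?_
  rw [← compl_frontier_eq_union_interior]
  exact hsA.subset_compl_right

lemma exists_add_smul_mem_frontier {E : Type*} [NormedAddCommGroup E] [NormedSpace ℝ E]
    {A : Set E} (hA : Bornology.IsBounded A) {z v : E} (hz : z ∈ A) (hv : v ≠ 0) :
    ∃ τ : ℝ, 0 ≤ τ ∧ z + τ • v ∈ frontier A := by
  by_contra! hτ
  have hray : IsPreconnected ((fun τ : ℝ => z + τ • v) '' Ici 0) :=
    isPreconnected_Ici.image _ (by fun_prop)
  have hdisj : Disjoint ((fun τ : ℝ => z + τ • v) '' Ici 0) (frontier A) := by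
    rw [disjoint_left, forall_mem_image]
    exact hτ
  have hz0 : z ∈ (fun τ : ℝ => z + τ • v) '' Ici 0 := ⟨0, self_mem_Ici, by simp⟩
  have hsub : (fun τ : ℝ => z + τ • v) '' Ici 0 ⊆ A := by
    rcases subset_interior_or_subset_interior_compl hray hdisj with h | h
    · exact h.trans interior_subset
    · exact absurd hz (interior_subset (h hz0))
  obtain ⟨R, hR⟩ := (hA.subset hsub).exists_norm_le
  have hv' : 0 < ‖v‖ := norm_pos_iff.2 hv
  have hR0 : 0 ≤ R := (norm_nonneg z).trans (hR z hz0)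
  set τ : ℝ := (R + ‖z‖ + 1) / ‖v‖ with hτ_def
  have hτ0 : 0 ≤ τ := by positivity
  have : R + ‖z‖ + 1 ≤ R + ‖z‖ :=
    calc R + ‖z‖ + 1 = ‖τ • v‖ := by
          rw [norm_smul, Real.norm_of_nonneg hτ0, hτ_def, div_mul_cancel₀ _ hv'.ne']
      _ = ‖(z + τ • v) - z‖ := by rw [add_sub_cancel_left]
      _ ≤ ‖z + τ • v‖ + ‖z‖ := norm_sub_le _ _
      _ ≤ R + ‖z‖ := add_le_add_left (hR _ ⟨τ, hτ0, rfl⟩) _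
  linarith

lemma abs_indicator_sub_indicator_sub_le {X : Type*} {A J : Set X} (hJA : J ⊆ A) {p : ℝ}
    (hp : p ∈ Icc (0 : ℝ) 1) (z w : X) :
    |(J.indicator 1 z - p * A.indicator 1 z) - (J.indicator 1 w - p * A.indicator 1 w)| ≤ 1 := by
  have hrange : ∀ z, J.indicator 1 z - p * A.indicator 1 z ∈ Icc (-p) (1 - p) := by
    intro z
    by_cases hzJ : z ∈ J
    · simp [hzJ, hJA hzJ]
    · by_cases hzA : z ∈ A <;> simp [hzJ, hzA, hp.1, hp.2]
  simpa using abs_sub_le_of_le_of_le (hrange z).1 (hrange z).2 (hrange w).1 (hrange w).2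

section StratifiedSampling

variable {ι X : Type*} [MeasurableSpace X] {μ : Measure X} {A J : Set X}

lemma abs_sum_le_of_stratified [Fintype ι] {Q : ι → Set X} (hQ : ∀ c, MeasurableSet (Q c))
    (hdisj : Pairwise (Function.onFun Disjoint Q)) {v : ℝ} (hv : 0 < v)
    (hμQ : ∀ c, μ.real (Q c) = v) {f : X → ℝ} (hf : Integrable f μ)
    (hf0 : ∫ z in ⋃ c, Q c, f z ∂μ = 0) {r : ℝ} (hr : ∀ z w, |f z - f w| ≤ r) {T : Finset ι}
    (hT : ∀ c ∉ T, ∀ z ∈ Q c, ∀ w ∈ Q c, f z = f w) {x : ι → X} (hx : ∀ c, x c ∈ Q c) :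
    |∑ c, f (x c)| ≤ r * #T := by
  have hfin : ∀ c, μ (Q c) < ⊤ := fun c =>
    lt_top_iff_ne_top.2 fun h => hv.ne (by rw [← hμQ c, measureReal_def, h, ENNReal.toReal_top])
  have hlocal : ∀ c, ∫ z in Q c, (f (x c) - f z) ∂μ = v * f (x c) - ∫ z in Q c, f z ∂μ := by
    intro c
    have hconst : IntegrableOn (fun _ => f (x c)) (Q c) μ := integrableOn_const (hfin c).ne
    rw [integral_sub hconst hf.integrableOn, setIntegral_const, hμQ, smul_eq_mul]
  have hsum : v * ∑ c, f (x c) = ∑ c ∈ T, ∫ z in Q c, (f (x c) - f z) ∂μ := by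
    rw [integral_iUnion_fintype hQ hdisj fun c => hf.integrableOn] at hf0
    rw [Finset.sum_subset (Finset.subset_univ T), Finset.sum_congr rfl fun c _ => hlocal c,
      Finset.sum_sub_distrib, hf0, sub_zero, Finset.mul_sum]
    intro c _ hc
    exact setIntegral_eq_zero_of_forall_eq_zero fun z hz =>
      sub_eq_zero.2 (hT c hc _ (hx c) z hz)
  have hbound : v * |∑ c, f (x c)| ≤ v * (r * #T) :=
    calc v * |∑ c, f (x c)| = |∑ c ∈ T, ∫ z in Q c, (f (x c) - f z) ∂μ| := by
          rw [← hsum, abs_mul, abs_of_pos hv]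
      _ ≤ ∑ c ∈ T, |∫ z in Q c, (f (x c) - f z) ∂μ| := Finset.abs_sum_le_sum_abs _ _
      _ ≤ ∑ c ∈ T, r * μ.real (Q c) := Finset.sum_le_sum fun c _ => by
          rw [← Real.norm_eq_abs]
          exact norm_setIntegral_le_of_norm_le_const (hfin c) fun z _ => hr (x c) z
      _ = v * (r * #T) := by simp only [hμQ, Finset.sum_const, nsmul_eq_mul]; ring
  exact le_of_mul_le_mul_left hbound hv

lemma integrable_indicator_one (hA : MeasurableSet A) (hfin : μ A ≠ ⊤) :
    Integrable (A.indicator (1 : X → ℝ)) μ :=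
  IntegrableOn.integrable_indicator (integrableOn_const (C := (1 : ℝ)) hfin) hA

lemma setIntegral_indicator_sub_eq_zero {U : Set X} (hA : MeasurableSet A) (hJ : MeasurableSet J)
    (hJA : J ⊆ A) (hfin : μ A ≠ ⊤) (hAU : A ≤ᵐ[μ] U) :
    ∫ z in U, (J.indicator 1 z - μ.real J / μ.real A * A.indicator 1 z) ∂μ = 0 := by
  have hsupp : ∀ᵐ z ∂μ, z ∉ U → J.indicator 1 z - μ.real J / μ.real A * A.indicator 1 z = 0 := by
    filter_upwards [hAU] with z hz hzU
    have hzA : z ∉ A := fun h => hzU (hz h)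
    have hzJ : z ∉ J := fun h => hzA (hJA h)
    simp [hzA, hzJ]
  have hnull : μ.real A = 0 → μ.real J = 0 := fun h => measureReal_mono_null hJA h hfin
  rw [setIntegral_eq_integral_of_ae_compl_eq_zero hsupp,
    integral_sub (integrable_indicator_one hJ (measure_ne_top_of_subset hJA hfin))
      ((integrable_indicator_one hA hfin).const_mul _),
    integral_const_mul, integral_indicator_one hJ, integral_indicator_one hA,
    div_mul_cancel_of_imp hnull, sub_self]

lemma abs_sum_indicator_sub_le_of_stratified [Fintype ι] {Q : ι → Set X}
    (hQ : ∀ c, MeasurableSet (Q c)) (hdisj : Pairwise (Function.onFun Disjoint Q)) {v : ℝ}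
    (hv : 0 < v) (hμQ : ∀ c, μ.real (Q c) = v) (hA : MeasurableSet A) (hJ : MeasurableSet J)
    (hJA : J ⊆ A) (hfin : μ A ≠ ⊤) (hAQ : A ≤ᵐ[μ] ⋃ c, Q c) {T : Finset ι}
    (hT : ∀ c ∉ T, ∀ z ∈ Q c, ∀ w ∈ Q c, (z ∈ A ↔ w ∈ A) ∧ (z ∈ J ↔ w ∈ J))
    {x : ι → X} (hx : ∀ c, x c ∈ Q c) :
    |∑ c, J.indicator 1 (x c) - μ.real J / μ.real A * ∑ c, A.indicator 1 (x c)| ≤ #T := by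
  have hp : μ.real J / μ.real A ∈ Icc (0 : ℝ) 1 :=
    ⟨by positivity, div_le_one_of_le₀ (measureReal_mono hJA hfin) measureReal_nonneg⟩
  rw [Finset.mul_sum, ← Finset.sum_sub_distrib, ← one_mul (#T : ℝ)]
  refine abs_sum_le_of_stratified (μ := μ) hQ hdisj hv hμQ
    (f := fun z => J.indicator 1 z - μ.real J / μ.real A * A.indicator 1 z)
    ((integrable_indicator_one hJ (measure_ne_top_of_subset hJA hfin)).sub
      ((integrable_indicator_one hA hfin).const_mul _))
    (setIntegral_indicator_sub_eq_zero hA hJ hJA hfin hAQ)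
    (abs_indicator_sub_indicator_sub_le hJA hp) (fun c hc z hz w hw => ?_) hx
  obtain ⟨hzwA, hzwJ⟩ := hT c hc z hz w hw
  classical simp only [indicator_apply, Pi.one_apply, hzwA, hzwJ]

end StratifiedSampling

section Grid

variable {d : ℕ}

/-- The integer coordinates of the cell containing `z` in the grid on `ℝ^d × ℝ` whose cells have
side `1 / m` in the first `d` directions and `1 / q` in the last one. -/
noncomputable def gridIndex (m q : ℕ) (z : (Fin d → ℝ) × ℝ) : (Fin d → ℤ) × ℤ :=
  (fun i => ⌊(m : ℝ) * z.1 i⌋, ⌊(q : ℝ) * z.2⌋)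

/-- The grid cell with integer coordinates `c`. Unlike `gridCubeP`, the cells range over the whole
space and may have a different height `1 / q`. -/
abbrev gridCell (m q : ℕ) (c : (Fin d → ℤ) × ℤ) : Set ((Fin d → ℝ) × ℝ) :=
  gridIndex m q ⁻¹' {c}

/-- The integer coordinates of the stratum `gridCubeP c`. -/
def stratumIndex {m : ℕ} (c : (Fin d → Fin m) × Fin m) : (Fin d → ℤ) × ℤ :=
  (fun i => ((c.1 i : ℕ) : ℤ), ((c.2 : ℕ) : ℤ))

lemma stratumIndex_injective {m : ℕ} :
    Function.Injective (stratumIndex : (Fin d → Fin m) × Fin m → (Fin d → ℤ) × ℤ) := by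
  intro c c' h
  simpa [stratumIndex, Prod.ext_iff, funext_iff, Fin.ext_iff] using h

variable {m q : ℕ}

lemma floor_mul_eq_iff_mem_Ico (hm : m ≠ 0) {x : ℝ} {a : ℤ} :
    ⌊(m : ℝ) * x⌋ = a ↔ x ∈ Ico ((a : ℝ) / m) (((a : ℝ) + 1) / m) := by
  have hm' : (0 : ℝ) < m := by positivity
  rw [Int.floor_eq_iff, mem_Ico, div_le_iff₀ hm', lt_div_iff₀ hm', mul_comm x]

lemma gridCell_eq_prod (hm : m ≠ 0) (hq : q ≠ 0) (c : (Fin d → ℤ) × ℤ) :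
    gridCell m q c = (univ.pi fun i => Ico ((c.1 i : ℝ) / m) (((c.1 i : ℝ) + 1) / m)) ×ˢ
      Ico ((c.2 : ℝ) / q) (((c.2 : ℝ) + 1) / q) := by
  ext z
  simp only [gridCell, gridIndex, mem_preimage, mem_singleton_iff, Prod.ext_iff, funext_iff,
    floor_mul_eq_iff_mem_Ico hm, floor_mul_eq_iff_mem_Ico hq, mem_prod, mem_univ_pi]

lemma gridCubeP_eq_gridCell (hm : m ≠ 0) (c : (Fin d → Fin m) × Fin m) :
    gridCubeP c = gridCell m m (stratumIndex c) := by
  ext z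
  simp [gridCell_eq_prod hm hm, gridCubeP, stratumIndex]

lemma measurableSet_gridCell (hm : m ≠ 0) (hq : q ≠ 0) (c : (Fin d → ℤ) × ℤ) :
    MeasurableSet (gridCell m q c) := by
  rw [gridCell_eq_prod hm hq]
  exact (MeasurableSet.univ_pi fun _ => measurableSet_Ico).prod measurableSet_Ico

lemma isPreconnected_gridCell (hm : m ≠ 0) (hq : q ≠ 0) (c : (Fin d → ℤ) × ℤ) :
    IsPreconnected (gridCell m q c) := by
  rw [gridCell_eq_prod hm hq]
  exact ((convex_pi fun _ _ => convex_Ico _ _).prod (convex_Ico _ _)).isPreconnected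

lemma volume_real_gridCell (hm : m ≠ 0) (hq : q ≠ 0) (c : (Fin d → ℤ) × ℤ) :
    volume.real (gridCell m q c) = ((m : ℝ) ^ d * q)⁻¹ := by
  have hside : ∀ (n : ℕ) (a : ℤ), ((a : ℝ) + 1) / n - (a : ℝ) / n = (n : ℝ)⁻¹ := fun n a => by ring
  rw [gridCell_eq_prod hm hq, measureReal_def, Measure.volume_eq_prod, Measure.prod_prod,
    Real.volume_pi_Ico, Real.volume_Ico]
  simp [hside, ENNReal.toReal_ofReal, mul_comm]

lemma iUnion_gridCubeP_eq_prod_Ico (hm : m ≠ 0) :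
    (⋃ c : (Fin d → Fin m) × Fin m, gridCubeP c) =
      (univ.pi fun i => Ico ((0 : Fin d → ℝ) i) ((1 : Fin d → ℝ) i)) ×ˢ Ico (0 : ℝ) 1 := by
  have hm' : (0 : ℝ) < m := by positivity
  have hcoord : ∀ x : ℝ, x ∈ Ico (0 : ℝ) 1 ↔ ∃ a : Fin m, ⌊(m : ℝ) * x⌋ = ((a : ℕ) : ℤ) := by
    intro x
    have hfloor : x ∈ Ico (0 : ℝ) 1 ↔ ⌊(m : ℝ) * x⌋ ∈ Ico (0 : ℤ) m := by
      rw [mem_Ico, mem_Ico, Int.floor_nonneg, Int.floor_lt, mul_nonneg_iff_of_pos_left hm',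
        Int.cast_natCast, mul_lt_iff_lt_one_right hm']
    rw [hfloor]
    constructor
    · rintro ⟨h0, h1⟩
      exact ⟨⟨⌊(m : ℝ) * x⌋.toNat, by omega⟩, by simp [h0]⟩
    · rintro ⟨a, ha⟩
      exact ⟨by omega, by omega⟩
  ext z
  simp only [mem_iUnion, gridCubeP_eq_gridCell hm, gridIndex, stratumIndex, mem_preimage,
    mem_singleton_iff, Prod.ext_iff, funext_iff, Prod.exists, exists_and_left, exists_and_right,
    mem_prod, mem_univ_pi, Pi.zero_apply, Pi.one_apply, hcoord, Classical.skolem]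

lemma pairwise_disjoint_gridCubeP (hm : m ≠ 0) :
    Pairwise (Function.onFun Disjoint
      (gridCubeP : (Fin d → Fin m) × Fin m → Set ((Fin d → ℝ) × ℝ))) := by
  intro c c' h
  simp only [Function.onFun, gridCubeP_eq_gridCell hm]
  exact pairwise_disjoint_fiber _ (stratumIndex_injective.ne h)

lemma prod_Icc_ae_eq_iUnion_gridCubeP (hm : m ≠ 0) :
    (Icc (0 : Fin d → ℝ) 1 ×ˢ Icc (0 : ℝ) 1 : Set ((Fin d → ℝ) × ℝ)) =ᵐ[volume]
      ⋃ c : (Fin d → Fin m) × Fin m, gridCubeP c := by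
  rw [iUnion_gridCubeP_eq_prod_Ico hm]
  exact (Measure.set_prod_ae_eq Measure.univ_pi_Ico_ae_eq_Icc Ico_ae_eq_Icc).symm

lemma gridCell_slice_subset {k : ℕ} (c : (Fin d → ℤ) × ℤ) (h : Fin k) :
    gridCell m (k * m) (c.1, k * c.2 + (h : ℕ)) ⊆ gridCell m m c := by
  intro z hz
  have hk : k ≠ 0 := (Fin.pos h).ne'
  simp only [mem_preimage, mem_singleton_iff, gridIndex, Prod.ext_iff, Nat.cast_mul,
    mul_assoc] at hz ⊢
  refine ⟨hz.1, ?_⟩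
  rw [← Int.natCast_mul_floor_div_cancel hk, hz.2, Int.mul_add_ediv_left _ _ (by omega)]
  simp [Int.ediv_eq_zero_of_lt]

lemma gridIndex_corner_add_diagonal (hm : m ≠ 0) (hq : q ≠ 0) (c : (Fin d → ℤ) × ℤ) (τ : ℝ) :
    gridIndex m q (fun i => (c.1 i : ℝ) / m + τ, (c.2 : ℝ) / q) =
      c + (fun _ => ⌊(m : ℝ) * τ⌋, 0) := by
  have hm' : (m : ℝ) ≠ 0 := by positivity
  have hq' : (q : ℝ) ≠ 0 := by positivity
  ext <;> simp [gridIndex, mul_add, mul_div_cancel₀, hm', hq']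

end Grid

section CellsMeetingASet

variable {d : ℕ}

lemma sq_sub_le_of_floor_mul_eq {m : ℝ} (hm : 0 < m) {x y : ℝ} (h : ⌊m * x⌋ = ⌊m * y⌋) :
    (x - y) ^ 2 ≤ 1 / m ^ 2 := by
  have : (m * x - m * y) ^ 2 ≤ 1 :=
    (sq_le_one_iff_abs_le_one _).2 (Int.abs_sub_lt_one_of_floor_eq_floor h).le
  rw [le_div_iff₀ (by positivity)]
  linarith [mul_pow (x - y) m 2, mul_comm m (x - y), mul_sub m x y]

lemma gridCell_subset_euclNbhdP {E : Set ((Fin d → ℝ) × ℝ)} {m q : ℕ} (hm : m ≠ 0) (hq : q ≠ 0)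
    {c : (Fin d → ℤ) × ℤ} (hc : c ∈ gridIndex m q '' E) :
    gridCell m q c ⊆ euclNbhdP E √(d / (m : ℝ) ^ 2 + 1 / (q : ℝ) ^ 2) := by
  obtain ⟨y, hy, rfl⟩ := hc
  intro x hx
  obtain ⟨hx₁, hx₂⟩ := Prod.ext_iff.1 hx
  refine ⟨y, hy, Real.sqrt_le_sqrt (add_le_add ?_ (sq_sub_le_of_floor_mul_eq (by positivity) hx₂))⟩
  calc ∑ i, (x.1 i - y.1 i) ^ 2 ≤ ∑ _i : Fin d, 1 / (m : ℝ) ^ 2 := Finset.sum_le_sum fun i _ =>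
        sq_sub_le_of_floor_mul_eq (by positivity) (congrFun hx₁ i)
    _ = d / (m : ℝ) ^ 2 := by simp [div_eq_mul_inv]

lemma euclNbhdP_subset_cthickening (E : Set ((Fin d → ℝ) × ℝ)) (ε : ℝ) :
    euclNbhdP E ε ⊆ Metric.cthickening ε E := by
  rintro x ⟨y, hy, h⟩
  refine Metric.mem_cthickening_of_dist_le x y ε E hy (le_trans ?_ h)
  have hsum : 0 ≤ ∑ i, (x.1 i - y.1 i) ^ 2 := Finset.sum_nonneg fun i _ => sq_nonneg _
  rw [Prod.dist_eq, max_le_iff, dist_pi_le_iff (Real.sqrt_nonneg _)]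
  refine ⟨fun i => Real.abs_le_sqrt ?_, Real.abs_le_sqrt (le_add_of_nonneg_left hsum)⟩
  exact (Finset.single_le_sum (fun i _ => sq_nonneg (x.1 i - y.1 i)) (Finset.mem_univ i)).trans
    (le_add_of_nonneg_right (sq_nonneg _))

lemma card_le_volume_euclNbhdP {E : Set ((Fin d → ℝ) × ℝ)} (hE : Bornology.IsBounded E)
    {m q : ℕ} (hm : m ≠ 0) (hq : q ≠ 0) {F : Finset ((Fin d → ℤ) × ℤ)}
    (hF : ↑F ⊆ gridIndex m q '' E) :
    (#F : ℝ) ≤ (m : ℝ) ^ d * q *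
      volume.real (euclNbhdP E √(d / (m : ℝ) ^ 2 + 1 / (q : ℝ) ^ 2)) := by
  set U := euclNbhdP E √(d / (m : ℝ) ^ 2 + 1 / (q : ℝ) ^ 2)
  have hU : Bornology.IsBounded U := hE.cthickening.subset (euclNbhdP_subset_cthickening E _)
  have hsub : ⋃ c ∈ F, gridCell m q c ⊆ U :=
    iUnion₂_subset fun c hc => gridCell_subset_euclNbhdP hm hq (hF hc)
  rw [← inv_mul_le_iff₀ (by positivity), mul_comm]
  calc (#F : ℝ) * ((m : ℝ) ^ d * q)⁻¹ = ∑ c ∈ F, volume.real (gridCell m q c) := by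
        simp only [volume_real_gridCell hm hq, Finset.sum_const, nsmul_eq_mul]
    _ = volume.real (⋃ c ∈ F, gridCell m q c) :=
        (measureReal_biUnion_finset (fun c _ c' _ h => pairwise_disjoint_fiber _ h)
          (fun c _ => measurableSet_gridCell hm hq c)
          fun c hc => ((hU.subset ((subset_biUnion_of_mem hc).trans hsub)).measure_lt_top).ne).symm
    _ ≤ volume.real U := measureReal_mono hsub hU.measure_lt_top.ne

lemma HasMinkowskiContentP.eventually_volume_le {A : Set ((Fin d → ℝ) × ℝ)} {M M' : ℝ}
    (h : HasMinkowskiContentP A M) (hM : M < M') {r : ℝ} (hr : 0 < r) :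
    ∀ᶠ m : ℕ in atTop, volume.real (euclNbhdP (frontier A) (r / m)) ≤ M' * (2 * (r / m)) := by
  have hlim : Tendsto (fun m : ℕ => r / m) atTop (nhdsWithin 0 (Ioi 0)) := by
    refine tendsto_nhdsWithin_iff.2 ⟨tendsto_const_div_atTop_nhds_zero_nat r, ?_⟩
    filter_upwards [eventually_gt_atTop 0] with m hm
    exact mem_Ioi.2 (by positivity)
  filter_upwards [(h.comp hlim).eventually_lt_const hM, eventually_gt_atTop 0] with m hlt hm
  exact ((div_lt_iff₀ (by positivity)).1 hlt).le

lemma HasMinkowskiContentP.eventually_card_le {A : Set ((Fin d → ℝ) × ℝ)} {M M' : ℝ}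
    (h : HasMinkowskiContentP A M) (hM : M < M') (hA : Bornology.IsBounded A) {k : ℕ}
    (hk : k ≠ 0) :
    ∀ᶠ m : ℕ in atTop, ∀ F : Finset ((Fin d → ℤ) × ℤ),
      ↑F ⊆ gridIndex m (k * m) '' frontier A →
        (#F : ℝ) ≤ 2 * k * √(d + 1 / (k : ℝ) ^ 2) * M' * (m : ℝ) ^ d := by
  have hr : 0 < √(d + 1 / (k : ℝ) ^ 2) := by positivity
  filter_upwards [h.eventually_volume_le hM hr, eventually_ne_atTop 0] with m hvol hm F hF
  have hdiam : √(d / (m : ℝ) ^ 2 + 1 / ((k * m : ℕ) : ℝ) ^ 2) = √(d + 1 / (k : ℝ) ^ 2) / m := by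
    rw [← Real.sqrt_sq (Nat.cast_nonneg m : (0 : ℝ) ≤ m), ← Real.sqrt_div (by positivity),
      Real.sqrt_sq (Nat.cast_nonneg m)]
    congr 1
    push_cast
    field_simp
  have hcard := card_le_volume_euclNbhdP (hA.closure.subset frontier_subset_closure) hm
    (mul_ne_zero hk hm) hF
  rw [hdiam] at hcard
  calc (#F : ℝ) ≤ (m : ℝ) ^ d * ((k * m : ℕ) : ℝ) *
          (M' * (2 * (√(d + 1 / (k : ℝ) ^ 2) / m))) := hcard.trans (by gcongr)
    _ = 2 * k * √(d + 1 / (k : ℝ) ^ 2) * M' * (m : ℝ) ^ d := by push_cast; field_simp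

end CellsMeetingASet

section StraddlingCells

variable {d m : ℕ} {A : Set ((Fin d → ℝ) × ℝ)} {B : Set (Fin d → ℝ)}

/-- The indices of the grid cells of side `1 / m` inside the interior of `A` that meet both
`B × ℝ` and its complement: together with the cells meeting `frontier A`, they are the only ones
on which the indicator of `A` or of `A ∩ (B × ℝ)` is not constant. -/
def straddlingCells (A : Set ((Fin d → ℝ) × ℝ)) (B : Set (Fin d → ℝ)) (m : ℕ) :
    Set ((Fin d → ℤ) × ℤ) :=
  {c | gridCell m m c ⊆ interior A ∧ (∃ z ∈ gridCell m m c, z.1 ∈ B) ∧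
    ∃ w ∈ gridCell m m c, w.1 ∉ B}

lemma neZero_of_mem_straddlingCells {c : (Fin d → ℤ) × ℤ} (hc : c ∈ straddlingCells A B m) :
    NeZero d := by
  refine ⟨?_⟩
  rintro rfl
  obtain ⟨-, ⟨z, -, hz⟩, w, -, hw⟩ := hc
  exact hw (Subsingleton.elim z.1 w.1 ▸ hz)

lemma shift_nonpos_of_mem_straddlingCells (hA : ∀ w ∈ A, 0 ≤ w.1) (hB : ∀ z ∈ B, Icc 0 z ⊆ B)
    {c : (Fin d → ℤ) × ℤ} {j : ℤ} (hc : c ∈ straddlingCells A B m)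
    (hcj : c + (fun _ => j, 0) ∈ straddlingCells A B m) : j ≤ 0 := by
  obtain ⟨hcA, -, w, hw, hwB⟩ := hc
  obtain ⟨-, ⟨z, hz, hzB⟩, -⟩ := hcj
  obtain ⟨i, hi⟩ : ∃ i, z.1 i < w.1 i := by
    by_contra! hwz
    exact hwB (hB z.1 hzB ⟨hA w (interior_subset (hcA hw)), hwz⟩)
  have hwi : ⌊(m : ℝ) * w.1 i⌋ = c.1 i := congrFun (congrArg Prod.fst hw) i
  have hzi : ⌊(m : ℝ) * z.1 i⌋ = c.1 i + j := congrFun (congrArg Prod.fst hz) i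
  have hle : ⌊(m : ℝ) * z.1 i⌋ ≤ ⌊(m : ℝ) * w.1 i⌋ := by gcongr
  omega

lemma shift_eq_zero_of_mem_straddlingCells (hA : ∀ w ∈ A, 0 ≤ w.1) (hB : ∀ z ∈ B, Icc 0 z ⊆ B)
    {c : (Fin d → ℤ) × ℤ} {j : ℤ} (hc : c ∈ straddlingCells A B m)
    (hcj : c + (fun _ => j, 0) ∈ straddlingCells A B m) : j = 0 := by
  refine le_antisymm (shift_nonpos_of_mem_straddlingCells hA hB hc hcj) ?_
  have hback : c + (fun _ => j, 0) + (fun _ => -j, 0) = c := by ext <;> simp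
  exact neg_nonpos.1 (shift_nonpos_of_mem_straddlingCells hA hB hcj (hback.symm ▸ hc))

lemma exists_shift_mem_gridIndex_image_frontier [NeZero d] (hA : Bornology.IsBounded A) {q : ℕ}
    (hm : m ≠ 0) (hq : q ≠ 0) {c : (Fin d → ℤ) × ℤ} (hc : gridCell m q c ⊆ interior A) (σ : ℤˣ) :
    ∃ k : ℤ, 0 < σ * k ∧ c + (fun _ => k, 0) ∈ gridIndex m q '' frontier A := by
  set z : (Fin d → ℝ) × ℝ := (fun i => (c.1 i : ℝ) / m, (c.2 : ℝ) / q)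
  set v : (Fin d → ℝ) × ℝ := (fun _ => ((σ : ℤ) : ℝ), 0)
  have hindex : ∀ τ : ℝ,
      gridIndex m q (z + τ • v) = c + (fun _ => ⌊(m : ℝ) * (τ * (σ : ℤ))⌋, 0) := by
    intro τ
    rw [← gridIndex_corner_add_diagonal hm hq]
    congr 1
    ext <;> simp [z, v]
  have hcell : ∀ τ : ℝ, ⌊(m : ℝ) * (τ * (σ : ℤ))⌋ = 0 → z + τ • v ∈ gridCell m q c := by
    intro τ hτ
    rw [mem_preimage, hindex, hτ]
    ext <;> simp
  have hz : z ∈ A := interior_subset (hc (by simpa using hcell 0 (by simp)))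
  have hv : v ≠ 0 := fun h => by
    simpa [v] using congrFun (congrArg Prod.fst h) 0
  obtain ⟨τ, hτ, hmem⟩ := exists_add_smul_mem_frontier hA hz hv
  refine ⟨⌊(m : ℝ) * (τ * (σ : ℤ))⌋, ?_, z + τ • v, hmem, hindex τ⟩
  have hne : ⌊(m : ℝ) * (τ * (σ : ℤ))⌋ ≠ 0 := fun h0 =>
    disjoint_interior_frontier.notMem_of_mem_left (hc (hcell τ h0)) hmem
  have hmτ : 0 ≤ (m : ℝ) * τ := by positivity
  rcases Int.units_eq_one_or σ with rfl | rfl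
  · have : 0 ≤ ⌊(m : ℝ) * (τ * ((1 : ℤˣ) : ℤ))⌋ := Int.floor_nonneg.2 (by simpa using hmτ)
    simpa using lt_of_le_of_ne this hne.symm
  · have : ⌊(m : ℝ) * (τ * ((-1 : ℤˣ) : ℤ))⌋ ≤ 0 := Int.floor_nonpos (by simpa using hmτ)
    simpa using lt_of_le_of_ne this hne

lemma eq_of_slice_add_shift_eq (hA : ∀ w ∈ A, 0 ≤ w.1) (hB : ∀ z ∈ B, Icc 0 z ⊆ B)
    {c c' : (Fin d → ℤ) × ℤ} (hc : c ∈ straddlingCells A B m) (hc' : c' ∈ straddlingCells A B m)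
    {k : ℕ} {h h' : Fin k} {j j' : ℤ}
    (heq : (c.1, k * c.2 + ((h : ℕ) : ℤ)) + (fun _ => j, 0) =
      (c'.1, k * c'.2 + ((h' : ℕ) : ℤ)) + (fun _ => j', 0)) :
    c = c' ∧ h = h' ∧ j = j' := by
  have hk : (k : ℤ) ≠ 0 := Nat.cast_ne_zero.2 (Fin.pos h).ne'
  have hdiv : ∀ (a : ℤ) (h : Fin k), (k * a + ((h : ℕ) : ℤ)) / k = a := fun a h => by
    rw [Int.mul_add_ediv_left _ _ hk, Int.ediv_eq_zero_of_lt (by omega) (by omega),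
      add_zero]
  have hsnd : k * c.2 + ((h : ℕ) : ℤ) = k * c'.2 + ((h' : ℕ) : ℤ) := by
    simpa using congrArg Prod.snd heq
  have hc₂ : c.2 = c'.2 := by rw [← hdiv c.2 h, hsnd, hdiv]
  have hfst : ∀ i, c.1 i + j = c'.1 i + j' := fun i => congrFun (congrArg Prod.fst heq) i
  have hshift : c' = c + (fun _ => j - j', 0) := by
    ext i
    · exact (by linarith [hfst i] : c'.1 i = c.1 i + (j - j'))
    · exact (by linarith : c'.2 = c.2 + 0)
  have hj : j - j' = 0 := shift_eq_zero_of_mem_straddlingCells hA hB hc (hshift ▸ hc')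
  refine ⟨?_, ?_, sub_eq_zero.1 hj⟩
  · rw [hshift, hj]
    exact (add_zero c).symm
  · rw [hc₂, add_right_inj] at hsnd
    exact Fin.ext (by exact_mod_cast hsnd)

lemma exists_finset_subset_gridIndex_image_frontier (hA : Bornology.IsBounded A)
    (hA0 : ∀ w ∈ A, 0 ≤ w.1) (hB : ∀ z ∈ B, Icc 0 z ⊆ B) (hm : m ≠ 0) {k : ℕ} (hk : k ≠ 0)
    {S : Finset ((Fin d → ℤ) × ℤ)} (hS : ↑S ⊆ straddlingCells A B m) :
    ∃ F : Finset ((Fin d → ℤ) × ℤ),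
      ↑F ⊆ gridIndex m (k * m) '' frontier A ∧ #F = 2 * k * #S := by
  classical
  have hexit : ∀ p : S × Fin k × ℤˣ, ∃ j : ℤ, 0 < p.2.2 * j ∧
      (p.1.1.1, k * p.1.1.2 + (p.2.1 : ℕ)) + (fun _ => j, 0) ∈
        gridIndex m (k * m) '' frontier A := by
    rintro ⟨⟨c, hc⟩, h, σ⟩
    have := neZero_of_mem_straddlingCells (hS hc)
    exact exists_shift_mem_gridIndex_image_frontier hA hm (mul_ne_zero hk hm)
      ((gridCell_slice_subset c h).trans (hS hc).1) σ
  choose j hj hmem using hexit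
  set g : S × Fin k × ℤˣ → (Fin d → ℤ) × ℤ := fun p =>
    (p.1.1.1, k * p.1.1.2 + (p.2.1 : ℕ)) + (fun _ => j p, 0)
  have hg : Function.Injective g := by
    rintro ⟨⟨c, hc⟩, h, σ⟩ ⟨⟨c', hc'⟩, h', σ'⟩ heq
    obtain ⟨rfl, rfl, hjj'⟩ := eq_of_slice_add_shift_eq hA0 hB (hS hc) (hS hc') heq
    have hσ : 0 < σ * j (⟨c, hc⟩, h, σ) := hj (⟨c, hc⟩, h, σ)
    have hσ' : 0 < σ' * j (⟨c, hc'⟩, h, σ') := hj (⟨c, hc'⟩, h, σ')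
    rw [← hjj'] at hσ'
    rcases Int.units_eq_one_or σ with rfl | rfl <;> rcases Int.units_eq_one_or σ' with rfl | rfl <;>
      first | rfl | (simp only [Units.val_one, Units.val_neg] at hσ hσ'; omega)
  refine ⟨Finset.univ.image g, ?_, ?_⟩
  · rw [Finset.coe_image, Finset.coe_univ, image_univ]
    exact range_subset_iff.2 hmem
  · rw [Finset.card_image_of_injective _ hg, Finset.card_univ, Fintype.card_prod, Fintype.card_coe,
      Fintype.card_prod, Fintype.card_fin, Fintype.card_units_int]
    ring

lemma HasMinkowskiContentP.eventually_card_straddlingCells_le {M M' : ℝ}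
    (h : HasMinkowskiContentP A M) (hM : M < M') (hA : Bornology.IsBounded A)
    (hA0 : ∀ w ∈ A, 0 ≤ w.1) {k : ℕ} (hk : k ≠ 0) :
    ∀ᶠ m : ℕ in atTop, ∀ B : Set (Fin d → ℝ), (∀ z ∈ B, Icc 0 z ⊆ B) →
      ∀ S : Finset ((Fin d → ℤ) × ℤ), ↑S ⊆ straddlingCells A B m →
        (#S : ℝ) ≤ √(d + 1 / (k : ℝ) ^ 2) * M' * (m : ℝ) ^ d := by
  filter_upwards [h.eventually_card_le hM hA hk, eventually_ne_atTop 0] with m hcard hm B hB S hS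
  obtain ⟨F, hF, hFS⟩ := exists_finset_subset_gridIndex_image_frontier hA hA0 hB hm hk hS
  have hle := hcard F hF
  rw [hFS] at hle
  push_cast at hle
  have hk' : (0 : ℝ) < 2 * k := by positivity
  refine le_of_mul_le_mul_left (hle.trans_eq ?_) hk'
  ring

lemma mem_iff_mem_of_notMem_straddlingCells (hm : m ≠ 0) {c : (Fin d → ℤ) × ℤ}
    (hfr : Disjoint (gridCell m m c) (frontier A)) (hc : c ∉ straddlingCells A B m)
    {z w : (Fin d → ℝ) × ℝ} (hz : z ∈ gridCell m m c) (hw : w ∈ gridCell m m c) :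
    (z ∈ A ↔ w ∈ A) ∧ (z ∈ A ∩ B ×ˢ univ ↔ w ∈ A ∩ B ×ˢ univ) := by
  rcases subset_interior_or_subset_interior_compl (isPreconnected_gridCell hm hm c) hfr with h | h
  · have hzA : z ∈ A := interior_subset (h hz)
    have hwA : w ∈ A := interior_subset (h hw)
    have hB : ∀ {u u'}, u ∈ gridCell m m c → u' ∈ gridCell m m c → u.1 ∈ B → u'.1 ∈ B :=
      fun hu hu' huB => by_contra fun hu'B => hc ⟨h, ⟨_, hu, huB⟩, _, hu', hu'B⟩
    exact ⟨iff_of_true hzA hwA, fun hzJ => ⟨hwA, hB hz hw hzJ.2.1, trivial⟩,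
      fun hwJ => ⟨hzA, hB hw hz hwJ.2.1, trivial⟩⟩
  · have hzA : z ∉ A := interior_subset (h hz)
    have hwA : w ∉ A := interior_subset (h hw)
    exact ⟨iff_of_false hzA hwA, iff_of_false (fun hzJ => hzA hzJ.1) fun hwJ => hwA hwJ.1⟩

end StraddlingCells

section Discrepancy

variable {d : ℕ} {A : Set ((Fin d → ℝ) × ℝ)}

lemma exists_abs_sum_indicator_sub_le_card (hAm : MeasurableSet A)
    (hA : A ⊆ Icc 0 1 ×ˢ Icc 0 1) {B : Set (Fin d → ℝ)} (hBm : MeasurableSet B) {m : ℕ}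
    (hm : m ≠ 0) {x : (Fin d → Fin m) × Fin m → (Fin d → ℝ) × ℝ}
    (hx : ∀ c, x c ∈ gridCubeP c) :
    ∃ K S : Finset ((Fin d → ℤ) × ℤ), ↑K ⊆ gridIndex m m '' frontier A ∧
      ↑S ⊆ straddlingCells A B m ∧
      |∑ c, (A ∩ B ×ˢ univ).indicator 1 (x c) -
        volume.real (A ∩ B ×ˢ univ) / volume.real A * ∑ c, A.indicator 1 (x c)| ≤ #K + #S := by
  classical
  set K : Finset ((Fin d → Fin m) × Fin m) :=
    {c | (gridCell m m (stratumIndex c) ∩ frontier A).Nonempty}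
  set S : Finset ((Fin d → Fin m) × Fin m) := {c | stratumIndex c ∈ straddlingCells A B m}
  refine ⟨K.image stratumIndex, S.image stratumIndex, ?_, ?_, ?_⟩
  · intro c' hc'
    obtain ⟨c, hc, rfl⟩ := Finset.mem_image.1 hc'
    obtain ⟨z, hz, hzA⟩ := (Finset.mem_filter.1 hc).2
    exact ⟨z, hzA, hz⟩
  · intro c' hc'
    obtain ⟨c, hc, rfl⟩ := Finset.mem_image.1 hc'
    exact (Finset.mem_filter.1 hc).2
  have hfin : volume A ≠ ⊤ :=
    measure_ne_top_of_subset hA (isCompact_Icc.prod isCompact_Icc).measure_lt_top.ne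
  rw [Finset.card_image_of_injective _ stratumIndex_injective,
    Finset.card_image_of_injective _ stratumIndex_injective, ← Nat.cast_add]
  refine (abs_sum_indicator_sub_le_of_stratified (T := K ∪ S) (v := ((m : ℝ) ^ d * m)⁻¹)
    (fun c => ?_) (pairwise_disjoint_gridCubeP hm) (by positivity) (fun c => ?_) hAm
    (hAm.inter (hBm.prod .univ)) inter_subset_left hfin
    (hA.eventuallyLE.trans (prod_Icc_ae_eq_iUnion_gridCubeP hm).le)
    (fun c hc z hz w hw => ?_) hx).trans (Nat.cast_le.2 (Finset.card_union_le K S))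
  · exact gridCubeP_eq_gridCell hm c ▸ measurableSet_gridCell hm hm _
  · rw [gridCubeP_eq_gridCell hm, volume_real_gridCell hm hm]
  · rw [gridCubeP_eq_gridCell hm] at hz hw
    simp only [K, S, Finset.mem_union, Finset.mem_filter, Finset.mem_univ, true_and, not_or,
      not_nonempty_iff_eq_empty, ← disjoint_iff_inter_eq_empty] at hc
    exact mem_iff_mem_of_notMem_straddlingCells hm hc.1 hc.2 hz hw

lemma HasMinkowskiContentP.eventually_abs_sum_indicator_sub_le {M : ℝ}
    (h : HasMinkowskiContentP A M) (hM : 0 < M) (hAm : MeasurableSet A)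
    (hA : A ⊆ Icc 0 1 ×ˢ Icc 0 1) :
    ∀ᶠ m : ℕ in atTop, ∀ x : (Fin d → Fin m) × Fin m → (Fin d → ℝ) × ℝ,
      (∀ c, x c ∈ gridCubeP c) → ∀ B : Set (Fin d → ℝ), MeasurableSet B →
        (∀ z ∈ B, Icc 0 z ⊆ B) →
        |∑ c, (A ∩ B ×ˢ univ).indicator 1 (x c) -
          volume.real (A ∩ B ×ˢ univ) / volume.real A * ∑ c, A.indicator 1 (x c)| ≤
            3 * √(d + 1) * M * (m : ℝ) ^ d := by
  have hbdd : Bornology.IsBounded A := (isCompact_Icc.prod isCompact_Icc).isBounded.subset hA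
  have hA0 : ∀ w ∈ A, 0 ≤ w.1 := fun w hw => (hA hw).1.1
  set a := √((d : ℝ) + 1)
  set b := √((d : ℝ) + 1 / ((2 : ℕ) : ℝ) ^ 2)
  have hab : b < a := Real.sqrt_lt_sqrt (by positivity) (by norm_num)
  have hab0 : 0 < 2 * a + b := by positivity
  -- Halving the cells makes `b < a`, and this is what leaves room for some `M' > M`.
  obtain ⟨M', hMM', hM'⟩ : ∃ M', M < M' ∧ (2 * a + b) * M' = 3 * a * M := by
    refine ⟨3 * a * M / (2 * a + b), ?_, mul_div_cancel₀ _ hab0.ne'⟩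
    rw [lt_div_iff₀ hab0]
    linarith [mul_lt_mul_of_pos_right hab hM]
  filter_upwards [h.eventually_card_le hMM' hbdd one_ne_zero,
    h.eventually_card_straddlingCells_le hMM' hbdd hA0 two_ne_zero, eventually_ne_atTop 0]
    with m hfrontier hstraddling hm x hx B hBm hB
  obtain ⟨K, S, hK, hS, hle⟩ := exists_abs_sum_indicator_sub_le_card hAm hA hBm hm hx
  have hKcard : (#K : ℝ) ≤ 2 * a * M' * m ^ d := by
    simpa [a] using hfrontier K (by rwa [one_mul])
  calc _ ≤ (#K : ℝ) + #S := hle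
    _ ≤ 2 * a * M' * m ^ d + b * M' * m ^ d := add_le_add hKcard (hstraddling B hB S hS)
    _ = (2 * a + b) * M' * m ^ d := by ring
    _ = 3 * a * M * m ^ d := by rw [hM']

end Discrepancy

section GraphRegion

variable {d : ℕ} {ψ : (Fin d → ℝ) → ℝ} {L : ℝ}

lemma graphRegion_subset (ψ : (Fin d → ℝ) → ℝ) (L : ℝ) :
    graphRegion ψ L ⊆ Icc 0 1 ×ˢ Icc 0 1 :=
  fun _ hz => ⟨hz.1, hz.2.1⟩

lemma measurableSet_graphRegion (hψ : Measurable ψ) (L : ℝ) :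
    MeasurableSet (graphRegion ψ L) :=
  (measurable_fst measurableSet_Icc).inter <| (measurable_snd measurableSet_Icc).inter <|
    measurableSet_le (measurable_snd.const_mul L) (hψ.comp measurable_fst)

lemma integrableOn_Icc_of_le (hψ : Measurable ψ) (hψ0 : ∀ z ∈ Icc (0 : Fin d → ℝ) 1, 0 ≤ ψ z)
    (hψL : ∀ z ∈ Icc (0 : Fin d → ℝ) 1, ψ z ≤ L) : IntegrableOn ψ (Icc 0 1) := by
  refine Measure.integrableOn_of_bounded (M := L) isCompact_Icc.measure_lt_top.ne
    hψ.aestronglyMeasurable ?_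
  filter_upwards [ae_restrict_mem measurableSet_Icc] with z hz
  rw [Real.norm_of_nonneg (hψ0 z hz)]
  exact hψL z hz

lemma mk_preimage_graphRegion (hL : 0 < L) {z : Fin d → ℝ} (hz : z ∈ Icc 0 1) (hzL : ψ z ≤ L) :
    Prod.mk z ⁻¹' graphRegion ψ L = Icc 0 (ψ z / L) := by
  ext h
  have hle : h ≤ ψ z / L ↔ L * h ≤ ψ z := by rw [le_div_iff₀ hL, mul_comm]
  have htop : h ≤ ψ z / L → h ≤ 1 := fun hh => hh.trans ((div_le_one hL).2 hzL)
  rw [mem_preimage, mem_Icc, hle]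
  exact ⟨fun hh => ⟨hh.2.1.1, hh.2.2⟩, fun hh => ⟨hz, ⟨hh.1, htop (hle.2 hh.2)⟩, hh.2⟩⟩

lemma volume_real_graphRegion_inter_prod (hL : 0 < L) (hψ : Measurable ψ)
    (hψ0 : ∀ z ∈ Icc (0 : Fin d → ℝ) 1, 0 ≤ ψ z) (hψL : ∀ z ∈ Icc (0 : Fin d → ℝ) 1, ψ z ≤ L)
    {B : Set (Fin d → ℝ)} (hBm : MeasurableSet B) (hB : B ⊆ Icc 0 1) :
    volume.real (graphRegion ψ L ∩ B ×ˢ univ) = (∫ z in B, ψ z) / L := by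
  have hslice : ∀ z, volume (Prod.mk z ⁻¹' (graphRegion ψ L ∩ B ×ˢ univ)) =
      B.indicator (fun z => ENNReal.ofReal (ψ z / L)) z := by
    intro z
    by_cases hz : z ∈ B
    · rw [preimage_inter, mk_preimage_prod_right hz, inter_univ,
        mk_preimage_graphRegion hL (hB hz) (hψL z (hB hz)), Real.volume_Icc, sub_zero,
        indicator_of_mem hz]
    · rw [preimage_inter, mk_preimage_prod_right_eq_empty hz, inter_empty, measure_empty,
        indicator_of_notMem hz]
  have hnonneg : 0 ≤ᵐ[volume.restrict B] fun z => ψ z / L := by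
    filter_upwards [ae_restrict_mem hBm] with z hz
    exact div_nonneg (hψ0 z (hB hz)) hL.le
  have hint : IntegrableOn (fun z => ψ z / L) B :=
    ((integrableOn_Icc_of_le hψ hψ0 hψL).mono_set hB).div_const L
  rw [measureReal_def, Measure.volume_eq_prod,
    Measure.prod_apply ((measurableSet_graphRegion hψ L).inter (hBm.prod .univ)),
    lintegral_congr hslice, lintegral_indicator hBm,
    ← ofReal_integral_eq_lintegral_ofReal hint hnonneg,
    ENNReal.toReal_ofReal (integral_nonneg_of_ae hnonneg), integral_div]

lemma volume_real_graphRegion (hL : 0 < L) (hψ : Measurable ψ)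
    (hψ0 : ∀ z ∈ Icc (0 : Fin d → ℝ) 1, 0 ≤ ψ z) (hψL : ∀ z ∈ Icc (0 : Fin d → ℝ) 1, ψ z ≤ L) :
    volume.real (graphRegion ψ L) = (∫ z in Icc 0 1, ψ z) / L := by
  rw [← volume_real_graphRegion_inter_prod hL hψ hψ0 hψL measurableSet_Icc subset_rfl,
    inter_eq_left.2 ((graphRegion_subset ψ L).trans (prod_mono_right (subset_univ _)))]

lemma measurableSet_lowerBox (t : Fin d → ℝ) : MeasurableSet (lowerBox t) := by
  have : lowerBox t = univ.pi fun i => Ico 0 (t i) := by ext; simp [lowerBox]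
  exact this ▸ MeasurableSet.univ_pi fun _ => measurableSet_Ico

lemma lowerBox_subset_Icc {t : Fin d → ℝ} (ht : t ≤ 1) : lowerBox t ⊆ Icc 0 1 :=
  fun _ hz => ⟨fun i => (hz i).1, fun i => ((hz i).2.trans_le (ht i)).le⟩

lemma Icc_subset_lowerBox {t z : Fin d → ℝ} (hz : z ∈ lowerBox t) : Icc 0 z ⊆ lowerBox t :=
  fun _ hw i => ⟨hw.1 i, (hw.2 i).trans_lt (hz i).2⟩

end GraphRegion

lemma natCast_mul_abs_div_sub_le (N : ℕ) (s p : ℝ) :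
    (N : ℝ) * |1 / N * s - p| ≤ |s - p * N| := by
  rcases eq_or_ne (N : ℝ) 0 with hN | hN
  · rw [hN, zero_mul]
    exact abs_nonneg _
  · rw [← Nat.abs_cast N, ← abs_mul, Nat.abs_cast]
    exact (congrArg abs (by field_simp)).le

lemma sum_indicator_eq_card {ι X : Type*} [Fintype ι] (A : Set X) (x : ι → X) :
    ∑ c, A.indicator (1 : X → ℝ) (x c) = Nat.card {c // x c ∈ A} := by
  classical
  simp [indicator_apply, Nat.card_eq_fintype_card, Fintype.card_subtype]

lemma sum_indicator_inter_preimage_eq {ι X Y : Type*} [Fintype ι] {A : Set X} {B : Set Y}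
    {g : X → Y} {x : ι → X} {N : ℕ} {y : Fin N → Y} (e : Fin N ≃ {c // x c ∈ A})
    (hy : ∀ k, y k = g (x (e k))) :
    ∑ c, (A ∩ g ⁻¹' B).indicator (1 : X → ℝ) (x c) = ∑ k, B.indicator (fun _ => (1 : ℝ)) (y k) := by
  classical
  have hfilter : ∀ c, c ∈ (Finset.univ.filter fun c => x c ∈ A) ↔ x c ∈ A := by simp
  simp only [hy]
  rw [e.sum_comp fun c => B.indicator (fun _ => (1 : ℝ)) (g (x c)),
    ← Finset.sum_subtype _ hfilter fun c => B.indicator (fun _ => (1 : ℝ)) (g (x c)),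
    Finset.sum_filter]
  simp only [indicator_apply, mem_inter_iff, mem_preimage, ite_and, Pi.one_apply]

theorem N_star_discrepancy_stratified_general (d : ℕ)
    (L : ℝ) (hL : 0 < L) (ψ : (Fin d → ℝ) → ℝ) (hmeas : Measurable ψ)
    (hψ0 : ∀ z ∈ Icc (0 : Fin d → ℝ) 1, 0 ≤ ψ z)
    (hψL : ∀ z ∈ Icc (0 : Fin d → ℝ) 1, ψ z ≤ L)
    (C : ℝ) (hC : C = ∫ z in Icc (0 : Fin d → ℝ) 1, ψ z) (hCpos : 0 < C)
    (MA : ℝ) (hMApos : 0 < MA) (hMink : HasMinkowskiContentP (graphRegion ψ L) MA) :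
    ∃ m₀ : ℕ, ∀ m : ℕ, m₀ ≤ m →
      ∀ x : ((Fin d → Fin m) × Fin m) → (Fin d → ℝ) × ℝ, (∀ c, x c ∈ gridCubeP c) →
      ∀ N : ℕ, N = Nat.card {c : (Fin d → Fin m) × Fin m // x c ∈ graphRegion ψ L} →
      ∀ (y : Fin N → (Fin d → ℝ))
        (e : Fin N ≃ {c : (Fin d → Fin m) × Fin m // x c ∈ graphRegion ψ L}),
        (∀ k, y k = (x (e k)).1) →
        ∀ B ⊆ Icc (0 : Fin d → ℝ) 1, MeasurableSet B → (∀ z ∈ B, Icc 0 z ⊆ B) →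
          (N : ℝ) * |(1 / (N : ℝ)) * ∑ k, B.indicator (fun _ => (1 : ℝ)) (y k)
              - (1 / C) * ∫ z in B, ψ z|
            ≤ 3 * Real.sqrt (d + 1) * MA * (m : ℝ) ^ d := by
  obtain ⟨m₀, hm₀⟩ := eventually_atTop.1 <| hMink.eventually_abs_sum_indicator_sub_le hMApos
    (measurableSet_graphRegion hmeas L) (graphRegion_subset ψ L)
  refine ⟨m₀, fun m hm x hx N hN y e hy B hB hBm hBdown => ?_⟩
  have hratio : volume.real (graphRegion ψ L ∩ B ×ˢ univ) / volume.real (graphRegion ψ L) =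
      1 / C * ∫ z in B, ψ z := by
    rw [volume_real_graphRegion_inter_prod hL hmeas hψ0 hψL hBm hB,
      volume_real_graphRegion hL hmeas hψ0 hψL, ← hC, div_eq_iff (div_pos hCpos hL).ne']
    field_simp
  have hbound := hm₀ m hm x hx B hBm hBdown
  rw [hratio, prod_univ, sum_indicator_inter_preimage_eq e hy, sum_indicator_eq_card, ← hN]
    at hbound
  exact (natCast_mul_abs_div_sub_le N _ _).trans hbound

/-- **Deterministic bound `N·D* ≤ 3√s M_A m^{s-1}`** (the `q = ∞` case of Theorem 2 of
the paper, with `s = d+1`): for all large `m` and every stratified point set (one point in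
each grid cube), the accepted points, projected onto the first `s-1` coordinates, satisfy
`N · D*_{N,ψ}(Y) ≤ 3 √s M_A m^{s-1}`. -/
theorem N_star_discrepancy_stratified (d : ℕ) (hd : 1 ≤ d)
    (L : ℝ) (hL : 0 < L) (ψ : (Fin d → ℝ) → ℝ) (hmeas : Measurable ψ)
    (hψ0 : ∀ z ∈ Icc (0 : Fin d → ℝ) 1, 0 ≤ ψ z)
    (hψL : ∀ z ∈ Icc (0 : Fin d → ℝ) 1, ψ z ≤ L)
    (C : ℝ) (hC : C = ∫ z in Icc (0 : Fin d → ℝ) 1, ψ z) (hCpos : 0 < C)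
    (MA : ℝ) (hMApos : 0 < MA) (hMink : HasMinkowskiContentP (graphRegion ψ L) MA) :
    ∃ m₀ : ℕ, ∀ m : ℕ, m₀ ≤ m →
      ∀ x : ((Fin d → Fin m) × Fin m) → (Fin d → ℝ) × ℝ, (∀ c, x c ∈ gridCubeP c) →
      ∀ N : ℕ, N = Nat.card {c : (Fin d → Fin m) × Fin m // x c ∈ graphRegion ψ L} →
      ∀ (y : Fin N → (Fin d → ℝ))
        (e : Fin N ≃ {c : (Fin d → Fin m) × Fin m // x c ∈ graphRegion ψ L}),
        (∀ k, y k = (x (e k)).1) →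
        ∀ t ∈ Icc (0 : Fin d → ℝ) 1,
          (N : ℝ) * |(1 / (N : ℝ)) * ∑ k, (lowerBox t).indicator (fun _ => (1 : ℝ)) (y k)
              - (1 / C) * ∫ z in lowerBox t, ψ z|
            ≤ 3 * Real.sqrt (d + 1) * MA * (m : ℝ) ^ d := by
  obtain ⟨m₀, hm₀⟩ := N_star_discrepancy_stratified_general d L hL ψ hmeas hψ0 hψL C hC
    hCpos MA hMApos hMink
  exact ⟨m₀, fun m hm x hx N hN y e hy t ht => hm₀ m hm x hx N hN y e hy (lowerBox t)
    (lowerBox_subset_Icc ht.2) (measurableSet_lowerBox t) fun _ => Icc_subset_lowerBox⟩
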